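/- arXiv:2506.21836 — 2 statements merged into one kernel-verified Lean document; each statement's English description precedes it below -/
import Mathlib

section
/- Characterization of plurality: Let X be a finite set with |X| ≥ 3. An SRS R : ℛ(𝔛) → ℛ(X) satisfies NT, WIVIP, TO, and SI if and only if R = R^P. -/
/-!
Social ranking solutions (SRSs).  The set of individuals is a finite type `X`;
coalitions are elements of `Finset X` (so the domain of a power relation is the
whole power set `𝔛 = 2^X`).  A weak order `≿ ∈ ℛ(𝔛)` is encoded as a relation
`r : Finset X → Finset X → Prop` together with (when needed) its list of
equivalence classes `L = [Σ₁, …, Σ_l]` in strictly decreasing order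
(`IsClassList r L`).
-/

namespace SocialRanking

variable {X : Type*} [Fintype X] [DecidableEq X]

/-- A weak order: a reflexive, complete and transitive binary relation. -/
def IsWeakOrder {A : Type*} (r : A → A → Prop) : Prop :=
  Reflexive r ∧ (∀ a b, r a b ∨ r b a) ∧ Transitive r

/-- A social ranking solution maps every weak order on `2^X` to a weak order on `X`. -/
def IsSRS (R : (Finset X → Finset X → Prop) → X → X → Prop) : Prop :=
  ∀ r, IsWeakOrder r → IsWeakOrder (R r)

/-- `IsClassList r L` : `L = [Σ₁, …, Σ_l]` is the list of the equivalence classes of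
the weak order `r` on `2^X`, in strictly decreasing order (`≿ : Σ₁ ≻ ⋯ ≻ Σ_l`):
every class is nonempty, every coalition lies in exactly one class, and
`S ≿ T ↔ i ≤ j` whenever `S ∈ Σᵢ` and `T ∈ Σⱼ` (0-based indices). -/
def IsClassList (r : Finset X → Finset X → Prop) (L : List (Finset (Finset X))) : Prop :=
  (∀ C ∈ L, C.Nonempty) ∧
  (∀ S : Finset X, ∃! i : ℕ, i < L.length ∧ S ∈ L.getD i ∅) ∧
  (∀ i j : ℕ, i < L.length → j < L.length →
    ∀ S ∈ L.getD i ∅, ∀ T ∈ L.getD j ∅, (r S T ↔ i ≤ j))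

/-- The asymmetric (strict) part `P` of a relation. -/
def StrictPart {A : Type*} (p : A → A → Prop) (a b : A) : Prop := p a b ∧ ¬ p b a

/-- The symmetric part `I` (indifference) of a relation. -/
def IndiffPart {A : Type*} (p : A → A → Prop) (a b : A) : Prop := p a b ∧ p b a

/-- The restrictions of `p` and `q` to `{x, y}` coincide. -/
def AgreeOn (p q : X → X → Prop) (x y : X) : Prop :=
  ∀ a ∈ ({x, y} : Set X), ∀ b ∈ ({x, y} : Set X), (p a b ↔ q a b)

/-- `|Δ[x]|` : the number of coalitions in `Δ` containing `x`. -/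
def count (Δ : Finset (Finset X)) (x : X) : ℕ := (Δ.filter (fun S => x ∈ S)).card

/-! ### Independence axioms and further axioms -/

/-- WIVIP: for a dichotomous `≿ : Σ₁ ≻ Σ₂`, any `x ∈ ⋂Σ₁` is socially strictly above
any `y ∉ ⋂Σ₁`. -/
def WIVIP (R : (Finset X → Finset X → Prop) → X → X → Prop) : Prop :=
  ∀ (r : Finset X → Finset X → Prop) (C₁ C₂ : Finset (Finset X)),
    IsClassList r [C₁, C₂] →
    ∀ x y : X, (∀ S ∈ C₁, x ∈ S) → (∃ S ∈ C₁, y ∉ S) →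
    StrictPart (R r) x y

/-- IWS (independence from the worst set): if `≿ : Σ₁ ≻ ⋯ ≻ Σ_{l-1} ≻ Σ_l` (`l ≥ 2`)
and `≿'` is obtained from `≿` by partitioning the worst class `Σ_l` into ordered
classes `Γ₁ ≻' ⋯ ≻' Γ_{l'}`, then `x P_≿ y` implies `x P_≿' y`. -/
def IWS (R : (Finset X → Finset X → Prop) → X → X → Prop) : Prop :=
  ∀ (r r' : Finset X → Finset X → Prop) (L Γ : List (Finset (Finset X)))
    (W : Finset (Finset X)),
    L ≠ [] → IsClassList r (L ++ [W]) → IsClassList r' (L ++ Γ) →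
    ∀ x y : X, StrictPart (R r) x y → StrictPart (R r') x y

/-- IBS (independence from the best set): if `≿ : Σ₁ ≻ Σ₂ ≻ ⋯ ≻ Σ_l` (`l ≥ 2`)
and `≿'` is obtained from `≿` by partitioning the best class `Σ₁` into ordered
classes `Γ₁ ≻' ⋯ ≻' Γ_{l'}`, then `x P_≿ y` implies `x P_≿' y`. -/
def IBS (R : (Finset X → Finset X → Prop) → X → X → Prop) : Prop :=
  ∀ (r r' : Finset X → Finset X → Prop) (B : Finset (Finset X))
    (L Γ : List (Finset (Finset X))),
    L ≠ [] → IsClassList r (B :: L) → IsClassList r' (Γ ++ L) →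
    ∀ x y : X, StrictPart (R r) x y → StrictPart (R r') x y

/-- TO (tops-only): two weak orders with the same best equivalence class get the
same social ranking. -/
def TO (R : (Finset X → Finset X → Prop) → X → X → Prop) : Prop :=
  ∀ (r r' : Finset X → Finset X → Prop) (B : Finset (Finset X))
    (L L' : List (Finset (Finset X))),
    IsClassList r (B :: L) → IsClassList r' (B :: L') → R r = R r'

/-- The class list obtained from `L` by sliding `Δ` out of class `k₁` into class `k₂`
(`Σ_{k₁}` is replaced by `Σ_{k₁} \ Δ` and `Σ_{k₂}` by `Σ_{k₂} ∪ Δ`; if `Δ = Σ_{k₁}`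
the emptied class disappears). -/
def slide (L : List (Finset (Finset X))) (k₁ k₂ : ℕ) (Δ : Finset (Finset X)) :
    List (Finset (Finset X)) :=
  ((L.set k₁ ((L.getD k₁ ∅) \ Δ)).set k₂ ((L.getD k₂ ∅) ∪ Δ)).filter
    (fun C => decide (C ≠ ∅))

/-- SI (slide independence): sliding a proper subfamily `Δ ⊊ Σ_{k₁}` with
`|Δ[x]| = |Δ[y]|` into another class does not change the social ranking on `{x, y}`. -/
def SI (R : (Finset X → Finset X → Prop) → X → X → Prop) : Prop :=
  ∀ (r r' : Finset X → Finset X → Prop) (L : List (Finset (Finset X)))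
    (k₁ k₂ : ℕ) (x y : X) (Δ : Finset (Finset X)),
    IsClassList r L → k₁ < L.length → k₂ < L.length →
    Δ ⊂ L.getD k₁ ∅ → count Δ x = count Δ y →
    IsClassList r' (slide L k₁ k₂ Δ) →
    AgreeOn (R r) (R r') x y

/-- SSI (strong slide independence): as SI, but `Δ ⊆ Σ_{k₁}` may be the whole class
(in which case the class disappears). -/
def SSI (R : (Finset X → Finset X → Prop) → X → X → Prop) : Prop :=
  ∀ (r r' : Finset X → Finset X → Prop) (L : List (Finset (Finset X)))
    (k₁ k₂ : ℕ) (x y : X) (Δ : Finset (Finset X)),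
    IsClassList r L → k₁ < L.length → k₂ < L.length →
    Δ ⊆ L.getD k₁ ∅ → count Δ x = count Δ y →
    IsClassList r' (slide L k₁ k₂ Δ) →
    AgreeOn (R r) (R r') x y

/-- Top-SI: the condition of SI restricted to slides out of the best class (`k₁ = 1`,
i.e. index `0`). -/
def TopSI (R : (Finset X → Finset X → Prop) → X → X → Prop) : Prop :=
  ∀ (r r' : Finset X → Finset X → Prop) (L : List (Finset (Finset X)))
    (k₂ : ℕ) (x y : X) (Δ : Finset (Finset X)),
    IsClassList r L → 0 < L.length → k₂ < L.length →
    Δ ⊂ L.getD 0 ∅ → count Δ x = count Δ y →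
    IsClassList r' (slide L 0 k₂ Δ) →
    AgreeOn (R r) (R r') x y

/-- The class list of `≿' : Σ₁ ≻' ⋯ ≻' Σ_{k-1} ≻' Δ ≻' Σ_k \ Δ ≻' ⋯ ≻' Σ_l`
(empty classes disappear). -/
def inuiList (L : List (Finset (Finset X))) (k : ℕ) (Δ : Finset (Finset X)) :
    List (Finset (Finset X)) :=
  (L.take k ++ [Δ, (L.getD k ∅) \ Δ] ++ L.drop (k + 1)).filter
    (fun C => decide (C ≠ ∅))

/-- INUI (independence of non-unanimous improvements). -/
def INUI (R : (Finset X → Finset X → Prop) → X → X → Prop) : Prop :=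
  ∀ (r r' : Finset X → Finset X → Prop) (L : List (Finset (Finset X)))
    (k : ℕ) (Δ : Finset (Finset X)) (x y : X),
    IsClassList r L → k < L.length → Δ ⊆ L.getD k ∅ →
    (∃ S ∈ Δ, x ∉ S) → (∃ S ∈ Δ, y ∉ S) →
    IsClassList r' (inuiList L k Δ) →
    AgreeOn (R r) (R r') x y

/-- The weak order `≿_π := {(π(S), π(T)) : S ≿ T}` induced by a permutation `π` of `X`. -/
def permRel (π : Equiv.Perm X) (r : Finset X → Finset X → Prop) :
    Finset X → Finset X → Prop :=
  fun A B => r (A.image π.symm) (B.image π.symm)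

/-- NT (neutrality). -/
def NT (R : (Finset X → Finset X → Prop) → X → X → Prop) : Prop :=
  ∀ (π : Equiv.Perm X) (r : Finset X → Finset X → Prop), IsWeakOrder r →
    ∀ x y : X, (R (permRel π r) (π x) (π y) ↔ R r x y)

/-- IIC (independence of irrelevant coalitions). -/
def IIC (R : (Finset X → Finset X → Prop) → X → X → Prop) : Prop :=
  ∀ (r r' : Finset X → Finset X → Prop), IsWeakOrder r → IsWeakOrder r' →
    ∀ x y : X,
      (∀ S : Finset X, x ∉ S → y ∉ S →
        (r (insert x S) (insert y S) ↔ r' (insert x S) (insert y S))) →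
      (R r x y ↔ R r' x y)

/-! ### The social ranking solutions -/

/-- `θ_≿(x) = (|Σ₁[x]|, …, |Σ_l[x]|)`. -/
def theta (L : List (Finset (Finset X))) (x : X) : List ℕ := L.map (fun C => count C x)

/-- The lexicographic order `a ≥^L b` on vectors of naturals. -/
def GeLex (a b : List ℕ) : Prop :=
  a = b ∨ ∃ k < a.length, (∀ j < k, a.getD j 0 = b.getD j 0) ∧ b.getD k 0 < a.getD k 0

/-- The dual lexicographic order `a ≥^DL b` (read from the last coordinate;
fewer appearances in worse classes is better). -/
def GeDualLex (a b : List ℕ) : Prop :=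
  a = b ∨ ∃ k < a.length, (∀ j, k < j → a.getD j 0 = b.getD j 0) ∧ a.getD k 0 < b.getD k 0

/-- The lexicographic excellence solution `R^L` : `x R^L_≿ y ↔ θ_≿(x) ≥^L θ_≿(y)`. -/
def RL (r : Finset X → Finset X → Prop) (x y : X) : Prop :=
  ∀ L, IsClassList r L → GeLex (theta L x) (theta L y)

/-- The dual lexicographic excellence solution `R^DL`. -/
def RDL (r : Finset X → Finset X → Prop) (x y : X) : Prop :=
  ∀ L, IsClassList r L → GeDualLex (theta L x) (theta L y)

/-- Plurality `R^P` : `x R^P_≿ y ↔ |Σ₁[x]| ≥ |Σ₁[y]|`. -/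
def RP (r : Finset X → Finset X → Prop) (x y : X) : Prop :=
  ∀ L, IsClassList r L → count (L.getD 0 ∅) y ≤ count (L.getD 0 ∅) x

/-- `e_≿(x)` : the largest `k` such that `x` belongs to every coalition of each of the
first `k` equivalence classes (`0` if `x ∉ T₁`). -/
def eIIS (L : List (Finset (Finset X))) (x : X) : ℕ :=
  (L.takeWhile (fun C => decide (∀ S ∈ C, x ∈ S))).length

/-- The intersection initial segment rule `R^IIS` : `x R^IIS_≿ y ↔ e_≿(x) ≥ e_≿(y)`. -/
def RIIS (r : Finset X → Finset X → Prop) (x y : X) : Prop :=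
  ∀ L, IsClassList r L → eIIS L y ≤ eIIS L x

/-- The constant-`X` rule: everybody is ranked indifferent. -/
def RconstX : (Finset X → Finset X → Prop) → X → X → Prop := fun _ _ _ => True

/-- The split-plurality score `s^split_≿(z) = ∑_{S ∈ Σ₁ : z ∈ S} 1/|S|`. -/
def splitScore (C : Finset (Finset X)) (z : X) : ℚ :=
  ∑ S ∈ C.filter (fun S => z ∈ S), (1 : ℚ) / (S.card : ℚ)

/-- Split-plurality `R^splitP`. -/
def RsplitP (r : Finset X → Finset X → Prop) (x y : X) : Prop :=
  ∀ L, IsClassList r L → splitScore (L.getD 0 ∅) y ≤ splitScore (L.getD 0 ∅) x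

/-- Plurality with tie-breaking by a linear order `t = ▷` :
`x R^{P,▷}_≿ y ↔ (x P^P_≿ y ∨ (x I^P_≿ y ∧ x ▷ y))`. -/
def RPtie (t : X → X → Prop) (r : Finset X → Finset X → Prop) (x y : X) : Prop :=
  ∀ L, IsClassList r L →
    (count (L.getD 0 ∅) y < count (L.getD 0 ∅) x ∨
      (count (L.getD 0 ∅) x = count (L.getD 0 ∅) y ∧ t x y))


open Classical in
/-- The best class of a relation. -/
noncomputable def top (r : Finset X → Finset X → Prop) : Finset (Finset X) :=
  Finset.univ.filter (fun S => ∀ T, r S T)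

theorem mem_top (r : Finset X → Finset X → Prop) (S : Finset X) :
    S ∈ top r ↔ ∀ T, r S T := by
  simp [top]

theorem top_eq {r : Finset X → Finset X → Prop} {L : List (Finset (Finset X))}
    (h : IsClassList r L) : 0 < L.length ∧ L.getD 0 ∅ = top r := by
  obtain ⟨h1, h2, h3⟩ := h
  have hpos : 0 < L.length := by
    obtain ⟨i, ⟨hi, _⟩, _⟩ := h2 ∅
    omega
  refine ⟨hpos, ?_⟩
  have hne : (L.getD 0 ∅).Nonempty := by
    apply h1
    rw [List.getD_eq_getElem _ _ hpos]
    exact List.getElem_mem hpos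
  obtain ⟨T0, hT0⟩ := hne
  ext S
  rw [mem_top]
  constructor
  · intro hS T
    obtain ⟨j, ⟨hj, hT⟩, _⟩ := h2 T
    exact (h3 0 j hpos hj S hS T hT).2 (Nat.zero_le _)
  · intro hS
    obtain ⟨i, ⟨hi, hSi⟩, _⟩ := h2 S
    have := (h3 i 0 hi hpos S hSi T0 hT0).1 (hS T0)
    have : i = 0 := by omega
    subst this
    exact hSi

theorem weak_of_classList {r : Finset X → Finset X → Prop} {L : List (Finset (Finset X))}
    (h : IsClassList r L) : IsWeakOrder r := by
  obtain ⟨h1, h2, h3⟩ := h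
  refine ⟨?_, ?_, ?_⟩
  · intro S
    obtain ⟨i, ⟨hi, hS⟩, _⟩ := h2 S
    exact (h3 i i hi hi S hS S hS).2 le_rfl
  · intro S T
    obtain ⟨i, ⟨hi, hS⟩, _⟩ := h2 S
    obtain ⟨j, ⟨hj, hT⟩, _⟩ := h2 T
    rw [h3 i j hi hj S hS T hT, h3 j i hj hi T hT S hS]
    exact le_total i j
  · intro S T U hST hTU
    obtain ⟨i, ⟨hi, hS⟩, _⟩ := h2 S
    obtain ⟨j, ⟨hj, hT⟩, _⟩ := h2 T
    obtain ⟨k, ⟨hk, hU⟩, _⟩ := h2 U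
    rw [h3 i j hi hj S hS T hT] at hST
    rw [h3 j k hj hk T hT U hU] at hTU
    exact (h3 i k hi hk S hS U hU).2 (hST.trans hTU)

theorem exists_classList {r : Finset X → Finset X → Prop} (h : IsWeakOrder r) :
    ∃ L, IsClassList r L := by
  classical
  obtain ⟨hr, ht, htr⟩ := h
  let f : Finset X → ℕ := fun S => (Finset.univ.filter (fun T => r T S)).card
  have hf : ∀ S T, r S T ↔ f S ≤ f T := by
    intro S T
    constructor
    · intro hST
      apply Finset.card_le_card
      intro U hU
      simp only [Finset.mem_filter, Finset.mem_univ, true_and] at hU ⊢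
      exact htr hU hST
    · intro hle
      by_contra hn
      have hTS : r T S := (ht S T).resolve_left hn
      have : f T < f S := by
        apply Finset.card_lt_card
        rw [Finset.ssubset_iff_of_subset]
        · exact ⟨S, by simp [hr S], by simp [hn]⟩
        · intro U hU
          simp only [Finset.mem_filter, Finset.mem_univ, true_and] at hU ⊢
          exact htr hU hTS
      omega
  let I := Finset.univ.image f
  let e := I.orderIsoOfFin rfl
  let g : Finset X → Fin I.card := fun S =>
    e.symm ⟨f S, Finset.mem_image_of_mem f (Finset.mem_univ S)⟩
  have hg : ∀ S T, r S T ↔ (g S : ℕ) ≤ g T := by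
    intro S T
    rw [hf, ← Fin.le_def, e.symm.le_iff_le]
    rfl
  have hs : ∀ i : ℕ, i < I.card → ∃ S, (g S : ℕ) = i := by
    intro i hi
    obtain ⟨S, _, hS⟩ := Finset.mem_image.1 (e ⟨i, hi⟩).2
    refine ⟨S, ?_⟩
    have : g S = ⟨i, hi⟩ := by
      simp only [g]
      rw [OrderIso.symm_apply_eq]
      exact Subtype.ext hS
    rw [this]
  have key : ∀ i < I.card, ∀ S, S ∈ ((List.range I.card).map
      (fun i => Finset.univ.filter (fun S => (g S : ℕ) = i))).getD i ∅ ↔ (g S : ℕ) = i := by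
    intro i hi S
    rw [List.getD_eq_getElem _ _ (by simpa using hi)]
    simp
  refine ⟨(List.range I.card).map (fun i => Finset.univ.filter (fun S => (g S : ℕ) = i)),
    ?_, ?_, ?_⟩
  · intro C hC
    obtain ⟨i, hi, rfl⟩ := List.mem_map.1 hC
    obtain ⟨S, hS⟩ := hs i (List.mem_range.1 hi)
    exact ⟨S, by simp [hS]⟩
  · intro S
    refine ⟨g S, ⟨by simp, (key _ (g S).2 S).2 rfl⟩, ?_⟩
    rintro j ⟨hj, hSj⟩
    exact ((key j (by simpa using hj) S).1 hSj).symm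
  · intro i j hi hj S hS T hT
    rw [key i (by simpa using hi)] at hS
    rw [key j (by simpa using hj)] at hT
    rw [hg, hS, hT]

theorem RP_iff {r : Finset X → Finset X → Prop} (h : IsWeakOrder r) (x y : X) :
    RP r x y ↔ count (top r) y ≤ count (top r) x := by
  constructor
  · intro hh
    obtain ⟨L, hL⟩ := exists_classList h
    rw [← (top_eq hL).2]
    exact hh L hL
  · intro hh L hL
    rw [(top_eq hL).2]
    exact hh

/-- The dichotomous relation with top `B`. -/
def dich (B : Finset (Finset X)) : Finset X → Finset X → Prop :=
  fun S T => S ∈ B ∨ T ∉ B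

theorem dich_weak (B : Finset (Finset X)) : IsWeakOrder (dich B) := by
  refine ⟨?_, ?_, ?_⟩
  · intro S; unfold dich; tauto
  · intro S T; unfold dich; tauto
  · intro S T U; unfold dich; tauto

theorem dich_two (B C : Finset (Finset X)) (hB : B.Nonempty) (hC : C.Nonempty)
    (hBC : ∀ S, S ∈ C ↔ S ∉ B) : IsClassList (dich B) [B, C] := by
  refine ⟨?_, ?_, ?_⟩
  · intro D hD
    simp only [List.mem_cons, List.not_mem_nil, or_false] at hD
    rcases hD with rfl | rfl <;> assumption
  · intro S
    by_cases hS : S ∈ B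
    · refine ⟨0, by simp [hS], ?_⟩
      rintro j ⟨hj, hj'⟩
      simp only [List.length_cons, List.length_nil] at hj
      interval_cases j
      · rfl
      · simp [hBC, hS] at hj'
    · refine ⟨1, by simp [hS, hBC], ?_⟩
      rintro j ⟨hj, hj'⟩
      simp only [List.length_cons, List.length_nil] at hj
      interval_cases j
      · simp [hS] at hj'
      · rfl
  · intro i j hi hj S hS T hT
    simp only [List.length_cons, List.length_nil] at hi hj
    interval_cases i <;> interval_cases j <;> simp_all [dich]

theorem dich_one : IsClassList (dich (Finset.univ : Finset (Finset X))) [Finset.univ] := by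
  refine ⟨by simp, ?_, ?_⟩
  · intro S
    refine ⟨0, by simp, ?_⟩
    rintro j ⟨hj, hj'⟩
    simpa using hj
  · intro i j hi hj S hS T hT
    simp only [List.length_cons, List.length_nil] at hi hj
    interval_cases i; interval_cases j; simp [dich]

theorem classList_cons {r : Finset X → Finset X → Prop} (h : IsWeakOrder r) :
    (top r).Nonempty ∧ ∃ L, IsClassList r (top r :: L) := by
  obtain ⟨L, hL⟩ := exists_classList h
  obtain ⟨h0, h1⟩ := top_eq hL
  cases L with
  | nil => simp at h0
  | cons B L =>
    simp only [List.getD_cons_zero] at h1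
    subst h1
    exact ⟨hL.1 _ (by simp), L, hL⟩

theorem TO_dich {R : (Finset X → Finset X → Prop) → X → X → Prop} (hTO : TO R)
    {r : Finset X → Finset X → Prop} (h : IsWeakOrder r) : R r = R (dich (top r)) := by
  obtain ⟨hne, L, hL⟩ := classList_cons h
  by_cases hu : top r = Finset.univ
  · rw [hu] at hL ⊢
    exact hTO _ _ _ _ _ hL dich_one
  · refine hTO _ _ _ _ _ hL (dich_two (top r) (top r)ᶜ hne ?_ (by simp))
    rw [Finset.nonempty_iff_ne_empty]
    simpa using hu

theorem sym_indiff {R : (Finset X → Finset X → Prop) → X → X → Prop} (hR : IsSRS R)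
    (hNT : NT R) (B : Finset (Finset X)) (x y : X)
    (hB : ∀ S, S.image (Equiv.swap x y) ∈ B ↔ S ∈ B) : R (dich B) x y := by
  have h1 : permRel (Equiv.swap x y) (dich B) = dich B := by
    funext S T
    simp only [permRel, dich, Equiv.symm_swap, hB]
  have h2 := hNT (Equiv.swap x y) (dich B) (dich_weak B) x y
  rw [h1, Equiv.swap_apply_left, Equiv.swap_apply_right] at h2
  rcases (hR _ (dich_weak B)).2.1 x y with h | h
  · exact h
  · exact h2.1 h

theorem swap_image_empty (x y : X) (S : Finset X) :
    S.image (Equiv.swap x y) = ∅ ↔ S = ∅ := by simp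

theorem slide_down {R : (Finset X → Finset X → Prop) → X → X → Prop} (hSI : SI R)
    (B G : Finset (Finset X)) (hG : G.Nonempty) (hGB : G ⊆ B) (hB : B ≠ Finset.univ) (x y : X)
    (hc : count (B \ G) x = count (B \ G) y) : AgreeOn (R (dich B)) (R (dich G)) x y := by
  have hBc : Bᶜ.Nonempty := by
    rw [Finset.nonempty_iff_ne_empty]; simpa using hB
  refine hSI _ _ [B, Bᶜ] 0 1 x y (B \ G)
    (dich_two B Bᶜ (hG.mono hGB) hBc (by simp)) (by simp) (by simp) ?_ hc ?_
  · simp only [List.getD_cons_zero]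
    obtain ⟨S, hS⟩ := hG
    rw [Finset.ssubset_iff_of_subset Finset.sdiff_subset]
    exact ⟨S, hGB hS, by simp [hS]⟩
  · have h1 : B \ (B \ G) = G := by
      rw [Finset.sdiff_sdiff_eq_self hGB]
    have hne : (Bᶜ ∪ B \ G).Nonempty := hBc.mono Finset.subset_union_left
    have : slide [B, Bᶜ] 0 1 (B \ G) = [G, Bᶜ ∪ B \ G] := by
      simp only [slide, List.getD_cons_zero, List.getD_cons_succ, List.set_cons_zero,
        List.set_cons_succ, h1]
      rw [List.filter_eq_self]
      intro C hC
      simp only [List.mem_cons, List.not_mem_nil, or_false] at hC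
      rcases hC with rfl | rfl
      · simpa using hG.ne_empty
      · exact decide_eq_true hne.ne_empty
    rw [this]
    refine dich_two _ _ hG hne ?_
    intro S
    have := @hGB S
    simp only [Finset.mem_union, Finset.mem_compl, Finset.mem_sdiff]
    tauto

theorem slide_up {R : (Finset X → Finset X → Prop) → X → X → Prop} (hSI : SI R)
    (B G : Finset (Finset X)) (hB : B.Nonempty) (hBG : B ⊆ G) (hG : G ≠ Finset.univ) (x y : X)
    (hc : count (G \ B) x = count (G \ B) y) : AgreeOn (R (dich B)) (R (dich G)) x y := by
  have := slide_down hSI G B hB hBG hG x y hc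
  intro a ha b hb
  exact (this a ha b hb).symm

theorem count_sdiff (B G : Finset (Finset X)) (h : G ⊆ B) (x : X) :
    count (B \ G) x + count G x = count B x := by
  unfold count
  rw [← Finset.card_union_of_disjoint, ← Finset.filter_union, Finset.sdiff_union_of_subset h]
  exact Finset.disjoint_filter_filter Finset.sdiff_disjoint

theorem count_empty_sing (x : X) : count ({∅} : Finset (Finset X)) x = 0 := by
  simp [count, Finset.filter_singleton]

theorem eq_case {R : (Finset X → Finset X → Prop) → X → X → Prop} (hR : IsSRS R)
    (hNT : NT R) (hSI : SI R) (B : Finset (Finset X)) (hB : B.Nonempty) (x y : X)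
    (hc : count B x = count B y) : R (dich B) x y := by
  by_cases hu : B = Finset.univ
  · apply sym_indiff hR hNT
    simp [hu]
  have key : ∀ B : Finset (Finset X), B ≠ Finset.univ → ∅ ∈ B → count B x = count B y →
      R (dich B) x y := by
    intro B hu hm hc
    have hsub : ({∅} : Finset (Finset X)) ⊆ B := by simpa using hm
    have h1 := count_sdiff B {∅} hsub x
    have h2 := count_sdiff B {∅} hsub y
    rw [count_empty_sing] at h1 h2
    refine (slide_down hSI B {∅} (by simp) hsub hu x y (by omega) x (by simp) y (by simp)).2 ?_
    apply sym_indiff hR hNT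
    simp
  by_cases hm : ∅ ∈ B
  · exact key B hu hm hc
  by_cases hu2 : insert ∅ B = Finset.univ
  · apply sym_indiff hR hNT
    have : ∀ S, S ∈ B ↔ S ≠ ∅ := by
      intro S
      have h3 : S ∈ insert ∅ B := by rw [hu2]; simp
      rw [Finset.mem_insert] at h3
      constructor
      · rintro h rfl
        exact hm h
      · intro h
        exact h3.resolve_left h
    intro S
    rw [this, this, Ne, swap_image_empty]
  · have hsub : B ⊆ insert ∅ B := Finset.subset_insert _ _
    have h0 : insert ∅ B \ B = {∅} := by
      ext S
      simp only [Finset.mem_sdiff, Finset.mem_insert, Finset.mem_singleton]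
      constructor
      · tauto
      · rintro rfl
        exact ⟨Or.inl rfl, hm⟩
    have h1 := count_sdiff _ _ hsub x
    have h2 := count_sdiff _ _ hsub y
    rw [h0, count_empty_sing] at h1 h2
    refine (slide_up hSI B (insert ∅ B) hB hsub hu2 x y ?_ x (by simp) y (by simp)).2 ?_
    · rw [h0, count_empty_sing, count_empty_sing]
    · exact key _ hu2 (by simp) (by omega)

theorem count_split (B : Finset (Finset X)) (x y : X) :
    count B x = (B.filter (fun S => x ∈ S ∧ y ∉ S)).card +
      (B.filter (fun S => x ∈ S ∧ y ∈ S)).card := by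
  unfold count
  rw [← Finset.card_filter_add_card_filter_not (s := B.filter (fun S => x ∈ S)) (fun S => y ∉ S)]
  simp [Finset.filter_filter]

theorem gt_case {R : (Finset X → Finset X → Prop) → X → X → Prop}
    (hW : WIVIP R) (hSI : SI R) (B : Finset (Finset X)) (x y : X)
    (hc : count B y < count B x) : StrictPart (R (dich B)) x y := by
  have hu : B ≠ Finset.univ := by
    rintro rfl
    have : count (Finset.univ : Finset (Finset X)) x = count Finset.univ y := by
      unfold count
      apply Finset.card_bij (fun S _ => S.image (Equiv.swap x y))
      · intro S hS
        simp only [Finset.mem_filter, Finset.mem_univ, true_and] at hS ⊢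
        exact Finset.mem_image.2 ⟨x, hS, by simp⟩
      · intro S _ T _ h
        exact Finset.image_injective (Equiv.injective _) h
      · intro S hS
        simp only [Finset.mem_filter, Finset.mem_univ, true_and] at hS
        refine ⟨S.image (Equiv.swap x y), ?_, ?_⟩
        · simp only [Finset.mem_filter, Finset.mem_univ, true_and]
          exact Finset.mem_image.2 ⟨y, hS, by simp⟩
        · rw [Finset.image_image]
          ext a
          simp
    omega
  have h1 := count_split B x y
  have h2 : count B y = (B.filter (fun S => y ∈ S ∧ x ∉ S)).card +
      (B.filter (fun S => x ∈ S ∧ y ∈ S)).card := by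
    rw [count_split B y x]
    simp only [and_comm]
  obtain ⟨G, hG, hGc⟩ := Finset.exists_subset_card_eq
    (s := B.filter (fun S => x ∈ S ∧ y ∉ S)) (n := count B x - count B y) (by omega)
  have hGB : G ⊆ B := hG.trans (Finset.filter_subset _ _)
  have hGx : ∀ S ∈ G, x ∈ S ∧ y ∉ S := fun S hS => (Finset.mem_filter.1 (hG hS)).2
  have hne : G.Nonempty := by
    rw [← Finset.card_pos]; omega
  have c1 : count G x = G.card := by
    unfold count
    rw [Finset.filter_true_of_mem (fun S hS => (hGx S hS).1)]
  have c2 : count G y = 0 := by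
    unfold count
    rw [Finset.filter_false_of_mem (fun S hS => (hGx S hS).2)]; rfl
  have d1 := count_sdiff B G hGB x
  have d2 := count_sdiff B G hGB y
  have hag := slide_down hSI B G hne hGB hu x y (by omega)
  have hGc' : Gᶜ.Nonempty := by
    rw [Finset.nonempty_iff_ne_empty]
    intro h
    rw [Finset.compl_eq_empty_iff] at h
    exact hu (Finset.univ_subset_iff.1 (h ▸ hGB))
  obtain ⟨S, hS⟩ := hne
  have := hW (dich G) G Gᶜ (dich_two _ _ ⟨S, hS⟩ hGc' (by simp)) x y
    (fun S hS => (hGx S hS).1) ⟨S, hS, (hGx S hS).2⟩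
  exact ⟨(hag x (by simp) y (by simp)).2 this.1,
    fun h => this.2 ((hag y (by simp) x (by simp)).1 h)⟩

theorem permRel_weak (π : Equiv.Perm X) {r : Finset X → Finset X → Prop} (h : IsWeakOrder r) :
    IsWeakOrder (permRel π r) :=
  ⟨fun _ => h.1 _, fun _ _ => h.2.1 _ _, fun _ _ _ h1 h2 => h.2.2 h1 h2⟩

theorem count_perm (π : Equiv.Perm X) (r : Finset X → Finset X → Prop) (x : X) :
    count (top (permRel π r)) (π x) = count (top r) x := by
  have hinv : ∀ S : Finset X, (S.image π).image π.symm = S := by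
    intro S; rw [Finset.image_image]; simp
  have hinv' : ∀ S : Finset X, (S.image π.symm).image π = S := by
    intro S; rw [Finset.image_image]; simp
  symm
  unfold count
  apply Finset.card_bij (fun S _ => S.image π)
  · intro S hS
    simp only [Finset.mem_filter, mem_top] at hS ⊢
    refine ⟨?_, Finset.mem_image_of_mem _ hS.2⟩
    intro T
    simp only [permRel, hinv]
    exact hS.1 _
  · intro S _ T _ h
    exact Finset.image_injective (Equiv.injective _) h
  · intro S hS
    simp only [Finset.mem_filter, mem_top] at hS
    refine ⟨S.image π.symm, ?_, hinv' S⟩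
    simp only [Finset.mem_filter, mem_top]
    refine ⟨?_, Finset.mem_image.2 ⟨_, hS.2, by simp⟩⟩
    intro T
    have := hS.1 (T.image π)
    simpa only [permRel, hinv] using this

theorem count_union (A D : Finset (Finset X)) (h : Disjoint A D) (x : X) :
    count (A ∪ D) x = count A x + count D x := by
  unfold count
  rw [Finset.filter_union, Finset.card_union_of_disjoint (Finset.disjoint_filter_filter h)]

theorem slide_count {r r' : Finset X → Finset X → Prop} {L : List (Finset (Finset X))}
    {k₁ k₂ : ℕ} {x y : X} {Δ : Finset (Finset X)}
    (hL : IsClassList r L) (h1 : k₁ < L.length) (h2 : k₂ < L.length)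
    (hD : Δ ⊂ L.getD k₁ ∅) (hc : count Δ x = count Δ y)
    (hL' : IsClassList r' (slide L k₁ k₂ Δ)) :
    count (top r) x + count (top r') y = count (top r') x + count (top r) y := by
  obtain ⟨h0, ht⟩ := top_eq hL
  have hne : ∀ C ∈ L, C ≠ ∅ := fun C hC => (hL.1 C hC).ne_empty
  have hsl : slide L k₁ k₂ Δ =
      (L.set k₁ ((L.getD k₁ ∅) \ Δ)).set k₂ ((L.getD k₂ ∅) ∪ Δ) := by
    unfold slide
    rw [List.filter_eq_self]
    intro C hC
    simp only [ne_eq, decide_eq_true_eq]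
    rcases List.mem_or_eq_of_mem_set hC with hC | rfl
    · rcases List.mem_or_eq_of_mem_set hC with hC | rfl
      · exact hne C hC
      · intro h
        rw [Finset.sdiff_eq_empty_iff_subset] at h
        exact hD.2 h
    · intro h
      have := hne (L.getD k₂ ∅) (by
        rw [List.getD_eq_getElem _ _ h2]; exact List.getElem_mem h2)
      rw [Finset.union_eq_empty] at h
      exact this h.1
  obtain ⟨h0', ht'⟩ := top_eq hL'
  rw [hsl] at ht'
  have e1 := count_sdiff _ _ hD.1 x
  have e2 := count_sdiff _ _ hD.1 y
  by_cases hk2 : k₂ = 0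
  · subst hk2
    have ht2 : L.getD 0 ∅ ∪ Δ = top r' := by
      rw [← ht', List.getD_eq_getElem (List.set _ _ _) _ (by simpa using h0)]
      simp
    by_cases hk1 : k₁ = 0
    · subst hk1
      rw [Finset.union_eq_left.2 hD.1, ht] at ht2
      rw [ht2]
    · have hdis : Disjoint (L.getD 0 ∅) Δ := by
        rw [Finset.disjoint_left]
        intro S hS hSD
        exact hk1 ((hL.2.1 S).unique ⟨h1, hD.1 hSD⟩ ⟨h0, hS⟩)
      have u1 := count_union _ _ hdis x
      have u2 := count_union _ _ hdis y
      rw [ht2, ht] at u1 u2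
      omega
  · by_cases hk1 : k₁ = 0
    · subst hk1
      have ht2 : L.getD 0 ∅ \ Δ = top r' := by
        rw [← ht', List.getD_eq_getElem (List.set _ _ _) _ (by simpa using h0)]
        simp [List.getElem_set, hk2]
      rw [ht2, ht] at e1 e2
      omega
    · have ht2 : L.getD 0 ∅ = top r' := by
        rw [← ht', List.getD_eq_getElem (List.set _ _ _) _ (by simpa using h0),
          List.getD_eq_getElem _ _ h0]
        simp [List.getElem_set, hk2, hk1]
      rw [← ht2, ht]


/-- Theorem (characterization of plurality, `|X| ≥ 3`):
an SRS satisfies NT, WIVIP, TO and SI iff it is `R^P`. -/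
theorem plurality_characterization (hX : 3 ≤ Fintype.card X)
    (R : (Finset X → Finset X → Prop) → X → X → Prop) (hR : IsSRS R) :
    (NT R ∧ WIVIP R ∧ TO R ∧ SI R) ↔ (∀ r, IsWeakOrder r → R r = RP r) := by
  constructor
  · rintro ⟨hNT, hW, hTO, hSI⟩ r hr
    funext x y
    rw [eq_iff_iff, RP_iff hr, TO_dich hTO hr]
    obtain ⟨hne, -⟩ := classList_cons hr
    rcases lt_trichotomy (count (top r) x) (count (top r) y) with h | h | h
    · have := (gt_case hW hSI (top r) y x h).2
      exact ⟨fun h' => absurd h' this, fun h' => absurd h (by omega)⟩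
    · exact ⟨fun _ => h.ge, fun _ => eq_case hR hNT hSI _ hne x y h⟩
    · have := (gt_case hW hSI (top r) x y h).1
      exact ⟨fun _ => h.le, fun _ => this⟩
  · intro H
    have H' : ∀ r, IsWeakOrder r → ∀ x y, R r x y ↔ count (top r) y ≤ count (top r) x := by
      intro r hr x y
      rw [H r hr, RP_iff hr]
    refine ⟨?_, ?_, ?_, ?_⟩
    · intro π r hr x y
      rw [H' _ hr, H' _ (permRel_weak π hr), count_perm, count_perm]
    · intro r C₁ C₂ hL x y hx hy
      have hr := weak_of_classList hL
      have ht := (top_eq hL).2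
      simp only [List.getD_cons_zero] at ht
      have : count C₁ y < count C₁ x := by
        unfold count
        apply Finset.card_lt_card
        rw [Finset.filter_true_of_mem hx, Finset.ssubset_iff_of_subset (Finset.filter_subset _ _)]
        obtain ⟨S, hS, hyS⟩ := hy
        exact ⟨S, hS, by simp [hyS]⟩
      rw [StrictPart, H' _ hr, H' _ hr, ← ht]
      omega
    · intro r r' B L L' hL hL'
      funext x y
      rw [eq_iff_iff, H' _ (weak_of_classList hL), H' _ (weak_of_classList hL'),
        ← (top_eq hL).2, ← (top_eq hL').2]
      simp
    · intro r r' L k₁ k₂ x y Δ hL h1 h2 hD hc hL'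
      have hs := slide_count hL h1 h2 hD hc hL'
      intro a ha b hb
      rw [H' _ (weak_of_classList hL), H' _ (weak_of_classList hL')]
      simp only [Set.mem_insert_iff, Set.mem_singleton_iff] at ha hb
      rcases ha with rfl | rfl <;> rcases hb with rfl | rfl <;> omega

end SocialRanking
end

section
/- For any finite nonempty set X, any ≿ ∈ ℛ(𝔛), and any x, y ∈ X: if x P^L_≿ y (x is strictly above y under the lexicographic excellence solution), then x R^P_≿ y (x is weakly above y under plurality) and x R^IIS_≿ y (x is weakly above y under the intersection initial segment rule). -/
/-!
Social ranking solutions (SRSs).  The set of individuals is a finite type `X`;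
coalitions are elements of `Finset X` (so the domain of a power relation is the
whole power set `𝔛 = 2^X`).  A weak order `≿ ∈ ℛ(𝔛)` is encoded as a relation
`r : Finset X → Finset X → Prop` together with (when needed) its list of
equivalence classes `L = [Σ₁, …, Σ_l]` in strictly decreasing order
(`IsClassList r L`).
-/

namespace SocialRanking

variable {X : Type*} [Fintype X] [DecidableEq X]

theorem geLex_cons {a b : ℕ} {s t : List ℕ} (h : GeLex (a :: s) (b :: t)) :
    b < a ∨ (a = b ∧ GeLex s t) := by
  rcases h with h | ⟨k, hk, hj, hlt⟩
  · right
    simp only [List.cons.injEq] at h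
    exact ⟨h.1, Or.inl h.2⟩
  · cases k with
    | zero => left; simpa using hlt
    | succ k =>
      right
      refine ⟨by simpa using hj 0 (Nat.succ_pos k), Or.inr ⟨k, by simpa using hk, ?_, by simpa using hlt⟩⟩
      intro j hjk
      simpa using hj (j + 1) (Nat.succ_lt_succ hjk)

theorem count_le_card (C : Finset (Finset X)) (x : X) : count C x ≤ C.card :=
  Finset.card_filter_le _ _

theorem count_eq_card_iff (C : Finset (Finset X)) (x : X) :
    count C x = C.card ↔ ∀ S ∈ C, x ∈ S := Finset.card_filter_eq_iff

theorem eIIS_le_of_geLex (x y : X) (L : List (Finset (Finset X)))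
    (h : GeLex (theta L x) (theta L y)) : eIIS L y ≤ eIIS L x := by
  induction L with
  | nil => simp [eIIS]
  | cons C L ih =>
    have h' := geLex_cons (show GeLex (count C x :: theta L x) (count C y :: theta L y) from h)
    by_cases hy : ∀ S ∈ C, y ∈ S
    · have hc := (count_eq_card_iff C y).2 hy
      have hx' := count_le_card C x
      rcases h' with h' | ⟨h1, h2⟩
      · omega
      · have hx := (count_eq_card_iff C x).1 (h1.trans hc)
        have := ih h2
        unfold eIIS at this ⊢
        rw [List.takeWhile_cons_of_pos (by simpa using hy),
          List.takeWhile_cons_of_pos (by simpa using hx)]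
        simpa using this
    · unfold eIIS
      rw [List.takeWhile_cons_of_neg (by simpa using hy)]
      simp

/-- If `x P^L_≿ y` then `x R^P_≿ y` and `x R^IIS_≿ y`. -/
theorem lexcel_strict_implies [Nonempty X] (r : Finset X → Finset X → Prop)
    (hr : IsWeakOrder r) (x y : X) (h : StrictPart (RL r) x y) :
    RP r x y ∧ RIIS r x y := by
  refine ⟨fun L hL => ?_, fun L hL => eIIS_le_of_geLex x y L (h.1 L hL)⟩
  have hg := h.1 L hL
  cases L with
  | nil => simp [count]
  | cons C L =>
    have h' := geLex_cons (show GeLex (count C x :: theta L x) (count C y :: theta L y) from hg)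
    simp only [List.getD_cons_zero]
    rcases h' with h' | ⟨h1, _⟩ <;> omega

end SocialRanking
end
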